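/- Let A, B, C ≥ 0 and ε > 0 be real numbers, and let δ ≥ 0 satisfy δ · (B + C·ε + √(A·ε)) ≤ ε and C·δ < 1. Then A·δ²/(1 − C·δ) + B·δ ≤ ε. -/

import Mathlib

/-!
Put `p = δ √(A ε)` and `t = ε (1 - C δ)`. The hypothesis on `δ` says `p + B δ ≤ t`, so in
particular `p ≤ t`, and the first term of the claim is `p² / t ≤ p`. Hence the left-hand side is
at most `p + B δ ≤ t ≤ ε`.
-/

theorem sq_div_le_self_of_le {G₀ : Type*} [GroupWithZero G₀] [PartialOrder G₀] [PosMulMono G₀]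
    [MulPosReflectLT G₀] {p t : G₀} (hp : 0 ≤ p) (hpt : p ≤ t) : p ^ 2 / t ≤ p :=
  div_le_of_le_mul₀ (hp.trans hpt) hp ((sq p).trans_le (mul_le_mul_of_nonneg_left hpt hp))

theorem mul_sq_div_eq_sq_mul_sqrt_div {a e : ℝ} (hae : 0 ≤ a * e) (he : e ≠ 0) (d u : ℝ) :
    a * d ^ 2 / u = (d * √(a * e)) ^ 2 / (e * u) := by
  rw [mul_pow, Real.sq_sqrt hae, ← mul_div_mul_left _ u he]
  ring

/-- Let A, B, C ≥ 0 and ε > 0 be real, and let δ ≥ 0 satisfy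
δ·(B + C·ε + √(A·ε)) ≤ ε and C·δ < 1. Then A·δ²/(1 − C·δ) + B·δ ≤ ε. -/
theorem stmt8 (A B C ε δ : ℝ) (hA : 0 ≤ A) (hB : 0 ≤ B) (hC : 0 ≤ C) (hε : 0 < ε)
    (hδ : 0 ≤ δ) (hbound : δ * (B + C * ε + Real.sqrt (A * ε)) ≤ ε)
    (hCδ : C * δ < 1) :
    A * δ ^ 2 / (1 - C * δ) + B * δ ≤ ε := by
  have hp : 0 ≤ δ * √(A * ε) := by positivity
  have hpB : δ * √(A * ε) + B * δ ≤ ε * (1 - C * δ) := by linarith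
  have hpt : δ * √(A * ε) ≤ ε * (1 - C * δ) :=
    (le_add_of_nonneg_right (mul_nonneg hB hδ)).trans hpB
  have htε : ε * (1 - C * δ) ≤ ε :=
    mul_le_of_le_one_right hε.le (sub_le_self 1 (mul_nonneg hC hδ))
  calc A * δ ^ 2 / (1 - C * δ) + B * δ
      = (δ * √(A * ε)) ^ 2 / (ε * (1 - C * δ)) + B * δ := by
        rw [mul_sq_div_eq_sq_mul_sqrt_div (mul_nonneg hA hε.le) hε.ne']
    _ ≤ δ * √(A * ε) + B * δ := by gcongr; exact sq_div_le_self_of_le hp hpt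
    _ ≤ ε * (1 - C * δ) := hpB
    _ ≤ ε := htε
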